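/- Let Ω, U, λ, u be as in the setting. If A ⊆ closure(Ω) is a connected set containing at least two points such that every point of A is a critical point of u, then either every point of A is a local minimum point of u, or every point of A is a local maximum point of u. -/

import Mathlib

open Metric Set Filter Topology MeasureTheory

noncomputable section

abbrev E2 := EuclideanSpace ℝ (Fin 2)

/-- The Laplacian of `u`: the sum of the two pure second partial derivatives. -/
def lap (u : E2 → ℝ) (z : E2) : ℝ :=
  ∑ i : Fin 2, iteratedFDeriv ℝ 2 u z (fun _ => EuclideanSpace.single i 1)

/-!
Every point of `A` is an accumulation point of critical points, so the Hessian of `u` is degenerate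
on `A`.

If `Δ u` vanishes on `A`, the Hessian there is symmetric, trace-free and degenerate, hence zero in
dimension two. The directional derivatives of `u` then inherit all the hypotheses made on `u`, so
by induction every derivative of `u` vanishes on `A`, and `u` is constant near each point of `A`.

If `Δ u` is nonzero at `z ∈ A`, choose a direction `e` with `∂ₑ∂ₑu z ≠ 0`. Near `z` the ridge
`∂ₑu = 0` is an analytic curve containing all critical points. The derivative of `u` along this
curve vanishes at an accumulating set of parameters, hence identically, and so `u` is constant on
the ridge. Moving off the ridge in the direction `e`, `u` is concave or convex according to the sign
of `∂ₑ∂ₑu`, so `z` is a local extremum of the type given by the sign of `Δ u z`. Critical points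
near `z` have the same value as `z`, so connectedness makes `u` constant on `A`; then
`Δ u = -lam • u` is constant on `A` too, and all its points are extrema of the same type.
-/

open Module InnerProductSpace
open scoped ContDiff Laplacian

lemma eq_of_isPreconnected_of_eventually_eq {X Y : Type*} [TopologicalSpace X]
    [TopologicalSpace Y] [T1Space Y] {f : X → Y} {s : Set X} (hs : IsPreconnected s)
    (hf : ContinuousOn f s) {x y : X} (hx : x ∈ s) (hy : y ∈ s)
    (h : ∀ a ∈ s, f a = f x → ∀ᶠ b in 𝓝[s] a, f b = f x) :
    f y = f x := by
  refine (hs.induction₂ (fun a b => f a = f x ↔ f b = f x) (fun a ha => ?_)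
    (fun _ _ _ _ _ _ => Iff.trans) (fun _ _ _ _ => Iff.symm) hx hy).1 rfl
  by_cases hax : f a = f x
  · simpa only [hax, true_iff] using h a ha hax
  · simpa only [hax, false_iff] using (hf a ha).eventually_ne hax

section Calculus

variable {E : Type*} [NormedAddCommGroup E] [NormedSpace ℝ E]
  {F : Type*} [NormedAddCommGroup F] [NormedSpace ℝ F]

lemma eventually_eq_of_eventually_hasDerivAt_zero {f : ℝ → F} {a : ℝ}
    (hf : ∀ᶠ t in 𝓝 a, HasDerivAt f 0 t) : ∀ᶠ t in 𝓝 a, f t = f a := by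
  obtain ⟨r, hr, hball⟩ := eventually_nhds_iff_ball.1 hf
  filter_upwards [ball_mem_nhds a hr] with t ht
  exact isOpen_ball.is_const_of_deriv_eq_zero (convex_ball a r).isPreconnected
    (fun s hs => (hball s hs).differentiableAt.differentiableWithinAt)
    (fun s hs => (hball s hs).deriv) ht (mem_ball_self hr)

lemma eventually_eq_of_frequently_deriv_eq_zero [CompleteSpace F] {f : ℝ → F} {a : ℝ}
    (hf : AnalyticAt ℝ f a) (h : ∃ᶠ t in 𝓝[≠] a, deriv f t = 0) : ∀ᶠ t in 𝓝 a, f t = f a := by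
  apply eventually_eq_of_eventually_hasDerivAt_zero
  filter_upwards [hf.deriv.frequently_zero_iff_eventually_zero.1 h, hf.eventually_analyticAt]
    with t hderiv ht
  exact hderiv ▸ ht.differentiableAt.hasDerivAt

lemma eventually_eq_of_iteratedFDeriv_succ_eq_zero [CompleteSpace F] {f : E → F} {z : E}
    (hf : AnalyticAt ℝ f z) (h : ∀ n, iteratedFDeriv ℝ (n + 1) f z = 0) :
    ∀ᶠ y in 𝓝 z, f y = f z := by
  obtain ⟨p, r, hp⟩ := hf
  filter_upwards [eball_mem_nhds z hp.r_pos] with y hy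
  have hy' : y - z ∈ eball (0 : E) r := by simpa [edist_eq_enorm_sub] using hy
  have hsum := hp.hasSum_iteratedFDeriv hy'
  have hsingle := hasSum_single (f := fun n => (n.factorial : ℝ)⁻¹ •
    iteratedFDeriv ℝ n f z fun _ => y - z) 0 fun n hn => by
      obtain ⟨m, rfl⟩ := Nat.exists_eq_succ_of_ne_zero hn
      simp [h m]
  simpa using hsum.unique hsingle

lemma iteratedFDeriv_fderiv_apply {f : E → F} {z : E} (hf : ContDiffAt ℝ ω f z) (w : E) {n : ℕ}
    (m : Fin n → E) :
    iteratedFDeriv ℝ n (fun y => fderiv ℝ f y w) z m =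
      iteratedFDeriv ℝ (n + 1) f z (Fin.snoc m w) := by
  have hf' : ContDiffAt ℝ n (fderiv ℝ f) z := hf.fderiv_right (by simp)
  rw [iteratedFDeriv_succ_apply_right, Fin.init_snoc, Fin.snoc_last]
  exact congr($((ContinuousLinearMap.apply ℝ F w).iteratedFDeriv_comp_left hf' le_rfl) m)

lemma fderiv_fderiv_apply {f : E → F} {z : E} (hf : ContDiffAt ℝ 2 f z) (w x : E) :
    fderiv ℝ (fun y => fderiv ℝ f y w) z x = fderiv ℝ (fderiv ℝ f) z x w := by
  have hf' : DifferentiableAt ℝ (fderiv ℝ f) z :=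
    (hf.fderiv_right (m := 1) le_rfl).differentiableAt one_ne_zero
  rw [fderiv_clm_apply hf' (by fun_prop)]
  simp

lemma iteratedFDeriv_fderiv_apply_eq_fderiv_iteratedFDeriv {v : E → F} {z : E}
    (hv : ContDiffAt ℝ ω v z) (w : E) {n : ℕ} (m : Fin n → E) :
    iteratedFDeriv ℝ n (fun y => fderiv ℝ v y w) z m =
      fderiv ℝ (fun y => iteratedFDeriv ℝ n v y m) z w := by
  have hdiff : DifferentiableAt ℝ (iteratedFDeriv ℝ n v) z :=
    (hv.iteratedFDeriv_right (m := 1) (i := n) (by simp)).differentiableAt one_ne_zero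
  have hcons := hdiff.iteratedFDeriv_succ_apply_left' (m := Fin.cons w m)
  rw [Fin.tail_cons, Fin.cons_zero] at hcons
  rw [iteratedFDeriv_fderiv_apply hv, ← hcons, Fin.snoc_eq_cons_rotate]
  exact hv.iteratedFDeriv_comp_perm _ (finRotate (n + 1))

lemma le_of_fderiv_fderiv_apply_sub_nonpos {v : E → ℝ} {q x : E}
    (hv : ∀ y ∈ segment ℝ q x, ContDiffAt ℝ 2 v y) (hcrit : fderiv ℝ v q (x - q) = 0)
    (hneg : ∀ y ∈ segment ℝ q x, fderiv ℝ (fderiv ℝ v) y (x - q) (x - q) ≤ 0) : v x ≤ v q := by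
  set l : ℝ →ᵃ[ℝ] E := AffineMap.lineMap q x
  have hl (t : ℝ) : HasDerivAt l (x - q) t := AffineMap.hasDerivAt_lineMap
  have hmem {t : ℝ} (ht : t ∈ Icc 0 1) : l t ∈ segment ℝ q x :=
    segment_eq_image_lineMap ℝ q x ▸ mem_image_of_mem _ ht
  have hderiv {t : ℝ} (ht : t ∈ Icc 0 1) : HasDerivAt (v ∘ l) (fderiv ℝ v (l t) (x - q)) t :=
    ((hv _ (hmem ht)).differentiableAt two_ne_zero).hasFDerivAt.comp_hasDerivAt t (hl t)
  have hderiv_deriv {t : ℝ} (ht : t ∈ Icc 0 1) : HasDerivAt (fun t => fderiv ℝ v (l t) (x - q))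
      (fderiv ℝ (fderiv ℝ v) (l t) (x - q) (x - q)) t := by
    rw [← fderiv_fderiv_apply (hv _ (hmem ht))]
    have hd : DifferentiableAt ℝ (fun y => fderiv ℝ v y (x - q)) (l t) :=
      (((hv _ (hmem ht)).fderiv_right (m := 1) le_rfl).differentiableAt one_ne_zero).clm_apply
        (by fun_prop)
    exact hd.hasFDerivAt.comp_hasDerivAt t (hl t)
  have hconc : ConcaveOn ℝ (Icc 0 1) (v ∘ l) :=
    concaveOn_of_hasDerivWithinAt2_nonpos (convex_Icc 0 1)
      (fun t ht => (hderiv ht).continuousAt.continuousWithinAt)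
      (fun t ht => (hderiv (interior_subset ht)).hasDerivWithinAt)
      (fun t ht => (hderiv_deriv (interior_subset ht)).hasDerivWithinAt)
      (fun t ht => hneg _ (hmem (interior_subset ht)))
  have h0 : HasDerivAt (v ∘ l) 0 0 := by
    simpa [l, hcrit] using hderiv (left_mem_Icc.2 zero_le_one)
  simpa [l, slope_def_field] using hconc.slope_le_of_hasDerivAt
    (left_mem_Icc.2 zero_le_one) (right_mem_Icc.2 zero_le_one) zero_lt_one h0

lemma exists_analyticAt_level_section [FiniteDimensional ℝ E] {G : Type*}
    [NormedAddCommGroup G] [NormedSpace ℝ G] [CompleteSpace G] {g : E → ℝ} {z e : E}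
    (hg : AnalyticAt ℝ g z) (he : fderiv ℝ g z e ≠ 0) {φ : E →L[ℝ] G} (hφ : φ.range = ⊤)
    (hker : φ.ker = ℝ ∙ e) :
    ∃ γ : G → E, AnalyticAt ℝ γ (φ z) ∧
      ∀ᶠ x in 𝓝 z, g (γ (φ x)) = g z ∧ φ (γ (φ x)) = φ x ∧ (g x = g z → γ (φ x) = x) := by
  have hcomplete : CompleteSpace E := FiniteDimensional.complete ℝ E
  have he0 : e ≠ 0 := fun h => he (by simp [h])
  have hg0 : (fderiv ℝ g z).toLinearMap ≠ 0 := fun h => he congr($h e)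
  let d : ImplicitFunctionData ℝ E ℝ G :=
    { leftFun := g
      leftDeriv := fderiv ℝ g z
      rightFun := φ
      rightDeriv := φ
      pt := z
      hasStrictFDerivAt_leftFun := hg.hasStrictFDerivAt
      hasStrictFDerivAt_rightFun := φ.hasStrictFDerivAt
      range_leftDeriv := Module.Dual.range_eq_top_of_ne_zero hg0
      range_rightDeriv := hφ
      isCompl_ker := by
        rw [hker]
        exact Module.Dual.isCompl_ker_of_disjoint_of_ne_bot hg0
          ((Submodule.disjoint_span_singleton' he0).2 he) (by simpa using he0) }
  have hd : ContDiffAt ℝ ω d.implicitFunction.uncurry (g z, φ z) :=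
    d.contDiffAt_implicitFunction hg.contDiffAt φ.contDiff.contDiffAt (by simp)
  refine ⟨d.implicitFunction (g z), ?_, ?_⟩
  · exact (hd.comp (φ z) (f := fun t => (g z, t)) (by fun_prop)).analyticAt
  · filter_upwards [d.leftFun_implicitFunction_eq_leftFun,
      d.rightFun_implicitFunction_eq_rightFun, d.leftFun_eq_iff_implicitFunction] with x hl hr hx
    exact ⟨hl, hr, hx.1⟩

lemma eventually_apply_section_eq_of_frequently_fderiv_eq_zero [CompleteSpace E]
    [CompleteSpace F] {v : E → F} {φ : E → ℝ} {γ : ℝ → E} {z : E} (hv : AnalyticAt ℝ v z)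
    (hφ : ContinuousAt φ z) (hγ : AnalyticAt ℝ γ (φ z)) (hγz : γ (φ z) = z)
    (hfreq : ∃ᶠ x in 𝓝[≠] z, fderiv ℝ v x = 0 ∧ γ (φ x) = x) :
    ∀ᶠ x in 𝓝 z, v (γ (φ x)) = v z := by
  have hvγ : AnalyticAt ℝ (v ∘ γ) (φ z) := AnalyticAt.comp (by rwa [hγz]) hγ
  have hderiv : ∃ᶠ t in 𝓝[≠] φ z, deriv (v ∘ γ) t = 0 := by
    rw [frequently_nhdsWithin_iff] at hfreq ⊢
    refine hφ.frequently (hfreq.mp ?_)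
    filter_upwards [hφ.eventually hγ.eventually_analyticAt, hv.eventually_analyticAt]
      with x hγx hvx ⟨⟨hcrit, hfix⟩, hxz⟩
    have hvx' : HasFDerivAt v (0 : E →L[ℝ] F) (γ (φ x)) := by
      rw [hfix, ← hcrit]
      exact hvx.differentiableAt.hasFDerivAt
    have hne : φ x ≠ φ z := fun h => hxz (by rw [mem_singleton_iff, ← hfix, h, hγz])
    exact ⟨(hvx'.comp_hasDerivAt _ hγx.differentiableAt.hasDerivAt).deriv, hne⟩
  simpa [hγz] using hφ.eventually (eventually_eq_of_frequently_deriv_eq_zero hvγ hderiv)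

end Calculus

section Laplacian

variable {E : Type*} [NormedAddCommGroup E] [InnerProductSpace ℝ E] [FiniteDimensional ℝ E]
  {F : Type*} [NormedAddCommGroup F] [NormedSpace ℝ F] {ι : Type*} [Fintype ι]

lemma laplacian_eq_sum_fderiv_fderiv (b : OrthonormalBasis ι ℝ E) (v : E → F) (z : E) :
    Δ v z = ∑ i, fderiv ℝ (fderiv ℝ v) z (b i) (b i) := by
  simp [laplacian_eq_iteratedFDeriv_orthonormalBasis v b, iteratedFDeriv_two_apply]

lemma laplacian_fderiv_apply {v : E → F} {z : E} (hv : ContDiffAt ℝ ω v z) (w : E) :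
    Δ (fun y => fderiv ℝ v y w) z = fderiv ℝ (Δ v) z w := by
  have hdiff : DifferentiableAt ℝ (iteratedFDeriv ℝ 2 v) z :=
    (hv.iteratedFDeriv_right (m := 1) (i := 2) (by simp)).differentiableAt one_ne_zero
  simp only [laplacian_eq_iteratedFDeriv_stdOrthonormalBasis,
    iteratedFDeriv_fderiv_apply_eq_fderiv_iteratedFDeriv hv]
  rw [fderiv_fun_sum fun i _ => hdiff.continuousMultilinear_apply_const _]
  simp

/-- `v` is real-analytic at every point of `A` and solves the Helmholtz equation
`Δ v + lam • v = 0` on a neighbourhood of `A`. The neighbourhood is left implicit in the filter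
`𝓝ˢ A`, so that `A` may be any set, for instance a curve. -/
structure IsHelmholtzOnNhd (lam : ℝ) (v : E → F) (A : Set E) : Prop where
  analyticOnNhd : AnalyticOnNhd ℝ v A
  eventually_eq : ∀ᶠ y in 𝓝ˢ A, Δ v y = -(lam • v y)

namespace IsHelmholtzOnNhd

variable {lam : ℝ} {v : E → F} {A : Set E} {z : E}

lemma laplacian_eq (hv : IsHelmholtzOnNhd lam v A) (hz : z ∈ A) : Δ v z = -(lam • v z) :=
  hv.eventually_eq.self_of_nhdsSet z hz

lemma fderiv_apply [CompleteSpace F] (hv : IsHelmholtzOnNhd lam v A) (w : E) :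
    IsHelmholtzOnNhd lam (fun y => fderiv ℝ v y w) A where
  analyticOnNhd z hz :=
    ((ContinuousLinearMap.apply ℝ F w).analyticAt _).comp (hv.analyticOnNhd z hz).fderiv
  eventually_eq := by
    rw [eventually_nhdsSet_iff_forall]
    intro z hz
    have hz' := eventually_nhdsSet_iff_forall.1 hv.eventually_eq z hz
    filter_upwards [hz'.eventually_nhds, (hv.analyticOnNhd z hz).eventually_analyticAt]
      with y heq hvy
    rw [laplacian_fderiv_apply hvy.contDiffAt,
      EventuallyEq.fderiv_eq (f := fun x => -(lam • v x)) heq]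
    simp [fderiv_fun_neg, fderiv_fun_const_smul hvy.differentiableAt]

end IsHelmholtzOnNhd

end Laplacian

section Plane

attribute [local instance] FiniteDimensional.of_fact_finrank_eq_two

variable {E : Type*} [NormedAddCommGroup E] [InnerProductSpace ℝ E] [Fact (finrank ℝ E = 2)]
  {F : Type*} [NormedAddCommGroup F] [NormedSpace ℝ F]

lemma exists_orthonormalBasis_apply_zero_eq {e : E} (he : ‖e‖ = 1) :
    ∃ b : OrthonormalBasis (Fin 2) ℝ E, b 0 = e := by
  obtain ⟨b, hb⟩ := Orthonormal.exists_orthonormalBasis_extension_of_card_eq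
    (𝕜 := ℝ) (E := E) (ι := Fin 2) (by simpa using Fact.out) (v := fun _ => e) (s := {0})
    ⟨by simp [he], fun i j hij => (hij (Subsingleton.elim i j)).elim⟩
  exact ⟨b, hb 0 rfl⟩

lemma eq_zero_of_traceless_of_apply_eq_zero {H : E →L[ℝ] E →L[ℝ] F}
    (hsymm : ∀ x y, H x y = H y x)
    (htrace : ∀ b : OrthonormalBasis (Fin 2) ℝ E, ∑ i, H (b i) (b i) = 0)
    {x : E} (hx : x ≠ 0) (hHx : H x = 0) : H = 0 := by
  obtain ⟨b, hb⟩ := exists_orthonormalBasis_apply_zero_eq (norm_smul_inv_norm (𝕜 := ℝ) hx)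
  have h0 : H (b 0) = 0 := by simp [hb, hHx]
  have h11 : H (b 1) (b 1) = 0 := by simpa [Fin.sum_univ_two, h0] using htrace b
  have h10 : H (b 1) (b 0) = 0 := by simp [hsymm _ (b 0), h0]
  have h1 : H (b 1) = 0 := by
    refine ContinuousLinearMap.coe_injective (b.toBasis.ext fun i => ?_)
    fin_cases i <;> simp [h10, h11]
  refine ContinuousLinearMap.coe_injective (b.toBasis.ext fun i => ?_)
  fin_cases i <;> simp [h0, h1]

lemma fderiv_fderiv_eq_zero_of_frequently_fderiv_eq_zero {v : E → F} {z : E}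
    (hv : ContDiffAt ℝ ω v z) (hlap : Δ v z = 0)
    (hfreq : ∃ᶠ x in 𝓝[≠] z, fderiv ℝ v x = 0) : fderiv ℝ (fderiv ℝ v) z = 0 := by
  by_contra hne
  have hinj : Function.Injective (fderiv ℝ (fderiv ℝ v) z) := by
    refine (injective_iff_map_eq_zero _).2 fun x hHx => by_contra fun hx => hne ?_
    refine eq_zero_of_traceless_of_apply_eq_zero
      (fun x y => hv.isSymmSndFDerivAt_of_omega.eq x y) (fun b => ?_) hx hHx
    rw [← laplacian_eq_sum_fderiv_fderiv, hlap]
  obtain ⟨K, -, hK⟩ := LinearMap.exists_antilipschitzWith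
    (fderiv ℝ (fderiv ℝ v) z).toLinearMap (LinearMap.ker_eq_bot.2 hinj)
  have hderiv : HasFDerivAt (fderiv ℝ v) (fderiv ℝ (fderiv ℝ v) z) z :=
    ((hv.fderiv_right (m := 1) (by simp)).differentiableAt one_ne_zero).hasFDerivAt
  exact hfreq (hderiv.eventually_ne (c := 0) ⟨K, hK⟩)

lemma IsHelmholtzOnNhd.iteratedFDeriv_succ_eq_zero [CompleteSpace F] {lam : ℝ} {A : Set E}
    (hA : Preperfect A) {v : E → F} (hv : IsHelmholtzOnNhd lam v A) (hlap : ∀ z ∈ A, Δ v z = 0)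
    (hcrit : ∀ z ∈ A, fderiv ℝ v z = 0) {z : E} (hz : z ∈ A) (n : ℕ) :
    iteratedFDeriv ℝ (n + 1) v z = 0 := by
  induction n generalizing v with
  | zero => ext m; simp [hcrit z hz]
  | succ n ih =>
    have hω {y : E} (hy : y ∈ A) : ContDiffAt ℝ ω v y := (hv.analyticOnNhd y hy).contDiffAt
    have hhess {y : E} (hy : y ∈ A) : fderiv ℝ (fderiv ℝ v) y = 0 :=
      fderiv_fderiv_eq_zero_of_frequently_fderiv_eq_zero (hω hy) (hlap y hy)
        ((accPt_iff_frequently_nhdsNE.1 (hA y hy)).mono hcrit)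
    have hdir (w : E) : iteratedFDeriv ℝ (n + 1) (fun y => fderiv ℝ v y w) z = 0 := by
      have hw := hv.fderiv_apply w
      refine ih hw (fun y hy => ?_) fun y hy => ?_
      · simp [hw.laplacian_eq hy, hcrit y hy]
      · ext x
        simp [fderiv_fderiv_apply ((hω hy).of_le (by simp)), hhess hy]
    ext m
    rw [← Fin.snoc_init_self m, ← iteratedFDeriv_fderiv_apply (hω hz), hdir]
    simp

lemma exists_range_eq_top_and_ker_eq_span_singleton {e : E} (he : e ≠ 0) :
    ∃ φ : E →L[ℝ] ℝ, φ.range = ⊤ ∧ φ.ker = ℝ ∙ e := by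
  have hE : finrank ℝ E = 2 := Fact.out
  have hspan : finrank ℝ (ℝ ∙ e) = 1 := finrank_span_singleton he
  obtain ⟨f, hf, hfe⟩ := Submodule.exists_dual_map_eq_bot_of_lt_top
    (Submodule.lt_top_of_finrank_lt_finrank (s := ℝ ∙ e) (by lia)) inferInstance
  have hker := Module.Dual.finrank_ker_add_one_of_ne_zero hf
  have hle : ℝ ∙ e ≤ LinearMap.ker f := LinearMap.le_ker_iff_map.2 hfe
  exact ⟨f.toContinuousLinearMap, Module.Dual.range_eq_top_of_ne_zero hf,
    (Submodule.eq_of_le_of_finrank_eq hle (by lia)).symm⟩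

lemma exists_ridge_projection {v : E → ℝ} {z e : E} (hv : AnalyticAt ℝ v z)
    (he : fderiv ℝ (fderiv ℝ v) z e e ≠ 0) (hz : fderiv ℝ v z = 0)
    (hfreq : ∃ᶠ x in 𝓝[≠] z, fderiv ℝ v x = 0) :
    ∃ proj : E → E, Tendsto proj (𝓝 z) (𝓝 z) ∧ ∀ᶠ x in 𝓝 z, v (proj x) = v z ∧
      fderiv ℝ v (proj x) e = 0 ∧ x - proj x ∈ ℝ ∙ e ∧ (fderiv ℝ v x e = 0 → proj x = x) := by
  have hge : fderiv ℝ (fun y => fderiv ℝ v y e) z e ≠ 0 := by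
    rwa [fderiv_fderiv_apply hv.contDiffAt]
  obtain ⟨φ, hφ, hker⟩ := exists_range_eq_top_and_ker_eq_span_singleton (e := e)
    fun h => he (by simp [h])
  obtain ⟨γ, hγ, hlevel⟩ := exists_analyticAt_level_section
    (((ContinuousLinearMap.apply ℝ ℝ e).analyticAt _).comp hv.fderiv) hge hφ hker
  simp only [Function.comp_apply, ContinuousLinearMap.apply_apply, hz] at hlevel
  have hγz : γ (φ z) = z := hlevel.self_of_nhds.2.2 (by simp [hz])
  have hfix : ∃ᶠ x in 𝓝[≠] z, fderiv ℝ v x = 0 ∧ γ (φ x) = x :=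
    hfreq.mp (eventually_nhdsWithin_of_eventually_nhds
      (hlevel.mono fun x hx hcrit => ⟨hcrit, hx.2.2 (by simp [hcrit])⟩))
  have hconst := eventually_apply_section_eq_of_frequently_fderiv_eq_zero hv
    φ.continuous.continuousAt hγ hγz hfix
  refine ⟨γ ∘ φ, ?_, ?_⟩
  · simpa [hγz] using hγ.continuousAt.tendsto.comp (φ.continuous.tendsto z)
  · filter_upwards [hlevel, hconst] with x hx hvx
    refine ⟨hvx, by simpa using hx.1, ?_, by simpa using hx.2.2⟩
    rw [← hker]
    simp [hx.2.1]

lemma eventually_eq_of_fderiv_fderiv_ne_zero {v : E → ℝ} {z e : E} (hv : AnalyticAt ℝ v z)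
    (he : fderiv ℝ (fderiv ℝ v) z e e ≠ 0) (hz : fderiv ℝ v z = 0)
    (hfreq : ∃ᶠ x in 𝓝[≠] z, fderiv ℝ v x = 0) : ∀ᶠ x in 𝓝 z, fderiv ℝ v x = 0 → v x = v z := by
  obtain ⟨proj, -, hproj⟩ := exists_ridge_projection hv he hz hfreq
  filter_upwards [hproj] with x ⟨hvx, _, _, hfix⟩ hx
  rw [← hvx, hfix (by simp [hx])]

lemma isLocalMax_of_fderiv_fderiv_neg {v : E → ℝ} {z e : E} (hv : AnalyticAt ℝ v z)
    (he : fderiv ℝ (fderiv ℝ v) z e e < 0) (hz : fderiv ℝ v z = 0)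
    (hfreq : ∃ᶠ x in 𝓝[≠] z, fderiv ℝ v x = 0) : IsLocalMax v z := by
  obtain ⟨proj, hproj_tendsto, hproj⟩ := exists_ridge_projection hv he.ne hz hfreq
  have hneg : ∀ᶠ y in 𝓝 z, fderiv ℝ (fderiv ℝ v) y e e < 0 := by
    have hcont : ContinuousAt (fun y => fderiv ℝ (fderiv ℝ v) y e e) z :=
      (hv.fderiv.fderiv.continuousAt.clm_apply continuousAt_const).clm_apply continuousAt_const
    exact hcont.eventually_lt_const he
  obtain ⟨r, hr, hball⟩ := eventually_nhds_iff_ball.1 (hneg.and hv.eventually_analyticAt)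
  filter_upwards [hproj, ball_mem_nhds z hr, hproj_tendsto (ball_mem_nhds z hr)]
    with x ⟨hvx, hcrit, hline, _⟩ hx hprojx
  obtain ⟨c, hc⟩ := Submodule.mem_span_singleton.1 hline
  rw [← hvx]
  have hseg : segment ℝ (proj x) x ⊆ ball z r := (convex_ball z r).segment_subset hprojx hx
  refine le_of_fderiv_fderiv_apply_sub_nonpos (fun y hy => (hball y (hseg hy)).2.contDiffAt)
    (by simp [← hc, hcrit]) fun y hy => ?_
  have hyneg : c * (c * fderiv ℝ (fderiv ℝ v) y e e) ≤ 0 := by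
    nlinarith [(hball y (hseg hy)).1, mul_self_nonneg c]
  simpa [← hc] using hyneg

lemma eventually_eq_of_laplacian_ne_zero {v : E → ℝ} {z : E} (hv : AnalyticAt ℝ v z)
    (hlap : Δ v z ≠ 0) (hz : fderiv ℝ v z = 0) (hfreq : ∃ᶠ x in 𝓝[≠] z, fderiv ℝ v x = 0) :
    ∀ᶠ x in 𝓝 z, fderiv ℝ v x = 0 → v x = v z := by
  rw [laplacian_eq_sum_fderiv_fderiv (stdOrthonormalBasis ℝ E)] at hlap
  obtain ⟨i, -, hi⟩ := Finset.exists_ne_zero_of_sum_ne_zero hlap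
  exact eventually_eq_of_fderiv_fderiv_ne_zero hv hi hz hfreq

lemma isLocalMax_of_laplacian_neg {v : E → ℝ} {z : E} (hv : AnalyticAt ℝ v z)
    (hlap : Δ v z < 0) (hz : fderiv ℝ v z = 0) (hfreq : ∃ᶠ x in 𝓝[≠] z, fderiv ℝ v x = 0) :
    IsLocalMax v z := by
  rw [laplacian_eq_sum_fderiv_fderiv (stdOrthonormalBasis ℝ E)] at hlap
  obtain ⟨i, -, hi⟩ := Finset.exists_lt_of_sum_lt
    (hlap.trans_eq (Finset.sum_const_zero (s := Finset.univ)).symm)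
  exact isLocalMax_of_fderiv_fderiv_neg hv hi hz hfreq

lemma isLocalMin_of_laplacian_pos {v : E → ℝ} {z : E} (hv : AnalyticAt ℝ v z)
    (hlap : 0 < Δ v z) (hz : fderiv ℝ v z = 0) (hfreq : ∃ᶠ x in 𝓝[≠] z, fderiv ℝ v x = 0) :
    IsLocalMin v z := by
  simpa using (isLocalMax_of_laplacian_neg hv.neg (by simpa [laplacian_neg] using hlap)
    (by rw [fderiv_neg, hz, neg_zero]) (by simpa only [fderiv_neg, neg_eq_zero] using hfreq)).neg

lemma eq_of_isPreconnected_of_laplacian_ne_zero {v : E → ℝ} {A : Set E}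
    (hv : AnalyticOnNhd ℝ v A) (hconn : IsPreconnected A) (hA : Preperfect A)
    (hcrit : ∀ z ∈ A, fderiv ℝ v z = 0) {x y : E} (hx : x ∈ A) (hy : y ∈ A)
    (hlap : ∀ z ∈ A, v z = v x → Δ v z ≠ 0) : v y = v x := by
  refine eq_of_isPreconnected_of_eventually_eq hconn hv.continuousOn hx hy fun a ha hax => ?_
  have hfreq := (accPt_iff_frequently_nhdsNE.1 (hA a ha)).mono hcrit
  filter_upwards [self_mem_nhdsWithin, eventually_nhdsWithin_of_eventually_nhds
    (eventually_eq_of_laplacian_ne_zero (hv a ha) (hlap a ha hax) (hcrit a ha) hfreq)]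
    with b hb heq
  rw [heq (hcrit b hb), hax]

theorem connected_critical_set_min_or_max_general {lam : ℝ} {u : E → ℝ} {A : Set E}
    (hu : IsHelmholtzOnNhd lam u A) (hconn : IsPreconnected A) (hnt : A.Nontrivial)
    (hcrit : ∀ z ∈ A, fderiv ℝ u z = 0) :
    (∀ z ∈ A, IsLocalMin u z) ∨ (∀ z ∈ A, IsLocalMax u z) := by
  have hA : Preperfect A := hconn.preperfect_of_nontrivial hnt
  have hfreq {z} (hz : z ∈ A) : ∃ᶠ x in 𝓝[≠] z, fderiv ℝ u x = 0 :=
    (accPt_iff_frequently_nhdsNE.1 (hA z hz)).mono hcrit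
  by_cases! hzero : ∀ z ∈ A, Δ u z = 0
  · left
    intro z hz
    exact (eventually_eq_of_iteratedFDeriv_succ_eq_zero (hu.analyticOnNhd z hz)
      (hu.iteratedFDeriv_succ_eq_zero hA hzero hcrit hz)).mono fun y hy => hy.ge
  obtain ⟨z₀, hz₀, hlap⟩ := hzero
  have hlap_congr {a} (ha : a ∈ A) (h : u a = u z₀) : Δ u a = Δ u z₀ := by
    rw [hu.laplacian_eq ha, hu.laplacian_eq hz₀, h]
  have hconst {z} (hz : z ∈ A) : Δ u z = Δ u z₀ :=
    hlap_congr hz (eq_of_isPreconnected_of_laplacian_ne_zero hu.analyticOnNhd hconn hA hcrit hz₀ hz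
      fun a ha h => hlap_congr ha h ▸ hlap)
  rcases hlap.lt_or_gt with hneg | hpos
  · exact .inr fun z hz => isLocalMax_of_laplacian_neg (hu.analyticOnNhd z hz)
      ((hconst hz).trans_lt hneg) (hcrit z hz) (hfreq hz)
  · exact .inl fun z hz => isLocalMin_of_laplacian_pos (hu.analyticOnNhd z hz)
      (hpos.trans_eq (hconst hz).symm) (hcrit z hz) (hfreq hz)

end Plane

lemma lap_eq_laplacian (u : E2 → ℝ) : lap u = Δ u := by
  funext z
  rw [laplacian_eq_sum_fderiv_fderiv (EuclideanSpace.basisFun (Fin 2) ℝ)]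
  simp [lap, iteratedFDeriv_two_apply]

/-- A connected set of critical points of `u` with at least two points consists either
entirely of local minimum points or entirely of local maximum points of `u`. -/
theorem connected_critical_set_min_or_max
    (Ω U : Set E2) (hΩne : Ω.Nonempty) (hΩo : IsOpen Ω)
    (hΩb : Bornology.IsBounded Ω)
    (hUo : IsOpen U) (hUconn : IsConnected U) (hsub : closure Ω ⊆ U)
    (lam : ℝ) (hlam : 0 < lam)
    (u : E2 → ℝ) (hu : AnalyticOnNhd ℝ u U)
    (hne : ∃ z ∈ U, u z ≠ 0)
    (heq : ∀ z ∈ U, lap u z + lam * u z = 0)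
    (A : Set E2) (hA : A ⊆ closure Ω) (hconn : IsConnected A) (hnt : A.Nontrivial)
    (hcrit : ∀ z ∈ A, gradient u z = 0) :
    (∀ z ∈ A, IsLocalMin u z) ∨ (∀ z ∈ A, IsLocalMax u z) := by
  have hdim : Fact (finrank ℝ E2 = 2) := ⟨finrank_euclideanSpace_fin⟩
  have hAU : A ⊆ U := hA.trans hsub
  have hHelmholtz : IsHelmholtzOnNhd lam u A :=
    { analyticOnNhd := hu.mono hAU
      eventually_eq := by
        filter_upwards [hUo.mem_nhdsSet.2 hAU] with z hz
        rw [← lap_eq_laplacian]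
        exact eq_neg_of_add_eq_zero_left (heq z hz) }
  exact connected_critical_set_min_or_max_general hHelmholtz hconn.isPreconnected hnt
    fun z hz => by simpa [gradient] using hcrit z hz
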